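/- Let X be a locally connected topological space, A ⊆ X a subset, f : X → ℝ continuous, and let x, y ∈ X be two points such that the sets Λ(x) and Λ(y) (defined as Λ(z) = {λ > f(z) : the connected component of z in {f < λ} is disjoint from A}) are both nonempty and bounded above; put λ(x) = sup Λ(x) and λ(y) = sup Λ(y). If the connected component of x in {f < λ(x)} intersects the connected component of y in {f < λ(y)}, then λ(x) = λ(y) and the two connected components coincide. In particular the family of maximal wells (C(x))_{x} consists of pairwise disjoint or identical sets. (Second assertion of Proposition 2.5 of the paper, Step 2 of its proof.) -/

import Mathlib

/-!
In a locally connected space, forming the connected component of a point commutes with directed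
unions of open sets. Hence the well of `z` at height `sup Λ(z)` is the union of the wells at the
heights in `Λ(z)`, so it still avoids `A`. If two such wells, of heights `a < b`, met, then the one
at the lower height, raised to height `b`, would be the other one; so it would avoid `A`, against
the maximality of `a`. Wells of equal height that meet are the same component.
-/

section ConnectedComponentIn

variable {X : Type*} [TopologicalSpace X]

theorem connectedComponentIn_eq_of_inter_nonempty {s : Set X} {x y : X}
    (h : (connectedComponentIn s x ∩ connectedComponentIn s y).Nonempty) :
    connectedComponentIn s x = connectedComponentIn s y := by
  obtain ⟨p, hpx, hpy⟩ := h
  exact (connectedComponentIn_eq hpx).trans (connectedComponentIn_eq hpy).symm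

theorem connectedComponentIn_iUnion_of_directed [LocallyConnectedSpace X] {ι : Sort*}
    {U : ι → Set X} (hU : ∀ i, IsOpen (U i)) (hdir : Directed (· ⊆ ·) U) (y : X) :
    connectedComponentIn (⋃ i, U i) y = ⋃ i, connectedComponentIn (U i) y := by
  refine Set.Subset.antisymm ?_
    (Set.iUnion_subset fun i => connectedComponentIn_mono y (Set.subset_iUnion U i))
  by_cases hy : y ∈ ⋃ i, U i
  swap
  · simp only [connectedComponentIn_eq_empty hy, Set.empty_subset]
  obtain ⟨i, hyi⟩ := Set.mem_iUnion.1 hy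
  refine isPreconnected_connectedComponentIn.subset_of_closure_inter_subset
    (isOpen_iUnion fun i => (hU i).connectedComponentIn)
    ⟨y, mem_connectedComponentIn hy, Set.mem_iUnion.2 ⟨i, mem_connectedComponentIn hyi⟩⟩ ?_
  rintro q ⟨hq_closure, hq⟩
  obtain ⟨j, hqj⟩ := Set.mem_iUnion.1 (connectedComponentIn_subset _ y hq)
  obtain ⟨p, hpq, hp⟩ := mem_closure_iff_nhds.1 hq_closure _
    (connectedComponentIn_mem_nhds ((hU j).mem_nhds hqj))
  obtain ⟨k, hpy⟩ := Set.mem_iUnion.1 hp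
  obtain ⟨m, hjm, hkm⟩ := hdir j k
  have hqy : connectedComponentIn (U m) q = connectedComponentIn (U m) y :=
    connectedComponentIn_eq_of_inter_nonempty
      ⟨p, connectedComponentIn_mono q hjm hpq, connectedComponentIn_mono y hkm hpy⟩
  exact Set.mem_iUnion.2 ⟨m, hqy ▸ mem_connectedComponentIn (hjm hqj)⟩

end ConnectedComponentIn

section Wells

variable {X α : Type*} [TopologicalSpace X]

section Preorder

variable [Preorder α] {f : X → α} {x y z : X} {l m : α}

/-- The well of `z` at height `l`: the connected component of `z` in `{f < l}`. The maximal well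
`C(z)` is the well of `z` at height `λ(z)`. It is empty when `l ≤ f z`. -/
def well (f : X → α) (l : α) (z : X) : Set X :=
  connectedComponentIn {w | f w < l} z

/-- The set `Λ(z)` of the heights above `f z` at which the well of `z` avoids the boundary `A`;
its least upper bound is `λ(z)`. -/
def wellHeights (f : X → α) (A : Set X) (z : X) : Set α :=
  {l | f z < l ∧ Disjoint (well f l z) A}

theorem lt_of_well_nonempty (h : (well f l z).Nonempty) : f z < l :=
  connectedComponentIn_nonempty_iff (F := {w | f w < l}).1 h

theorem well_mono (f : X → α) (z : X) (h : l ≤ m) : well f l z ⊆ well f m z :=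
  connectedComponentIn_mono z fun _ hw => lt_of_lt_of_le hw h

theorem well_eq_of_inter_nonempty (h : (well f l x ∩ well f l y).Nonempty) :
    well f l x = well f l y :=
  connectedComponentIn_eq_of_inter_nonempty h

end Preorder

section LinearOrder

variable [LocallyConnectedSpace X] [LinearOrder α] {f : X → α} {A : Set X} {x y z : X} {a b : α}

theorem well_eq_biUnion_of_isLUB (hf : UpperSemicontinuous f) {s : Set α} (hb : IsLUB s b)
    (z : X) : well f b z = ⋃ l ∈ s, well f l z := by
  have sublevel_eq : {w | f w < b} = ⋃ l : s, {w | f w < (l : α)} := by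
    ext w
    simp only [Set.mem_ofPred_eq, Set.mem_iUnion, Subtype.exists, exists_prop, lt_isLUB_iff hb]
  have sublevel_mono : Monotone fun l : s => {w | f w < (l : α)} :=
    fun _ _ hlm _ hw => lt_of_lt_of_le hw hlm
  calc
    well f b z = connectedComponentIn (⋃ l : s, {w | f w < (l : α)}) z := by
      rw [well, sublevel_eq]
    _ = ⋃ l : s, well f l z :=
      connectedComponentIn_iUnion_of_directed (fun l : s => hf.isOpen_preimage l)
        sublevel_mono.directed_le z
    _ = ⋃ l ∈ s, well f l z := Set.iUnion_subtype (· ∈ s) fun l => well f l z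

theorem disjoint_well_of_isLUB_wellHeights (hf : UpperSemicontinuous f)
    (hb : IsLUB (wellHeights f A z) b) : Disjoint (well f b z) A := by
  rw [well_eq_biUnion_of_isLUB hf hb z]
  exact Set.disjoint_iUnion₂_left.2 fun _ hl => hl.2

theorem isLUB_wellHeights_le_of_inter_nonempty (hf : UpperSemicontinuous f)
    (ha : a ∈ upperBounds (wellHeights f A x)) (hb : IsLUB (wellHeights f A y) b)
    (h : (well f a x ∩ well f b y).Nonempty) : b ≤ a := by
  by_contra! hab
  have raised : well f b x = well f b y :=
    well_eq_of_inter_nonempty (h.mono (Set.inter_subset_inter_left _ (well_mono f x hab.le)))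
  have b_mem : b ∈ wellHeights f A x :=
    ⟨(lt_of_well_nonempty h.left).trans hab, raised ▸ disjoint_well_of_isLUB_wellHeights hf hb⟩
  exact hab.not_ge (ha b_mem)

theorem stmt5_general (hf : UpperSemicontinuous f)
    (ha : IsLUB (wellHeights f A x) a) (hb : IsLUB (wellHeights f A y) b)
    (h : (well f a x ∩ well f b y).Nonempty) : a = b ∧ well f a x = well f b y := by
  obtain rfl : a = b := le_antisymm
    (isLUB_wellHeights_le_of_inter_nonempty hf hb.1 ha (by rwa [Set.inter_comm]))
    (isLUB_wellHeights_le_of_inter_nonempty hf ha.1 hb h)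
  exact ⟨rfl, well_eq_of_inter_nonempty h⟩

end LinearOrder

end Wells

/-- Second assertion of Proposition 2.5 (Step 2 of its proof): two maximal wells
`C(x)` and `C(y)` either coincide (with `λ(x) = λ(y)`) or are disjoint. -/
theorem stmt5 {X : Type*} [TopologicalSpace X] [LocallyConnectedSpace X]
    (A : Set X) (f : X → ℝ) (hf : Continuous f) (x y : X)
    (Λ : X → Set ℝ)
    (hΛ : ∀ z, Λ z = {l : ℝ | f z < l ∧ connectedComponentIn {w | f w < l} z ∩ A = ∅})
    (hxne : (Λ x).Nonempty) (hxbdd : BddAbove (Λ x))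
    (hyne : (Λ y).Nonempty) (hybdd : BddAbove (Λ y))
    (hinter : (connectedComponentIn {w | f w < sSup (Λ x)} x ∩
               connectedComponentIn {w | f w < sSup (Λ y)} y).Nonempty) :
    sSup (Λ x) = sSup (Λ y) ∧
    connectedComponentIn {w | f w < sSup (Λ x)} x =
      connectedComponentIn {w | f w < sSup (Λ y)} y := by
  obtain rfl : Λ = wellHeights f A :=
    funext fun z => by simp only [hΛ, wellHeights, well, Set.disjoint_iff_inter_eq_empty]
  exact stmt5_general hf.upperSemicontinuous (isLUB_csSup hxne hxbdd) (isLUB_csSup hyne hybdd)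
    hinter
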